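/- Let Λ and Γ be finite dimensional algebras over an algebraically closed field K, let M be a finitely generated left Λ-module and N a finitely generated left Γ-module. If P_M → M is a projective cover of M and P_N → N is a projective cover of N, then the induced map P_M⊗P_N → M⊗N is a projective cover of the (Λ⊗Γ)-module M⊗N. Dually, if I_M and I_N are injective envelopes of M and N respectively, then I_M⊗I_N is an injective envelope of the (Λ⊗Γ)-module M⊗N. -/

import Mathlib

open TensorProduct

section Pre
variable {K Λ Γ M N : Type*} [Field K] [Ring Λ] [Ring Γ] [Algebra K Λ] [Algebra K Γ]
  [AddCommGroup M] [Module K M] [Module Λ M] [IsScalarTower K Λ M]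
  [AddCommGroup N] [Module K N] [Module Γ N] [IsScalarTower K Γ N]

/-- The action of `Γ` on `M ⊗[K] N` through the right factor. -/
noncomputable def rsmul (g : Γ) (x : M ⊗[K] N) : M ⊗[K] N :=
  (TensorProduct.comm K M N).symm (g • TensorProduct.comm K M N x)

lemma rsmul_tmul (g : Γ) (m : M) (n : N) :
    rsmul g (m ⊗ₜ[K] n) = m ⊗ₜ[K] (g • n) := by
  simp [rsmul, TensorProduct.smul_tmul']

lemma rsmul_add (g : Γ) (x y : M ⊗[K] N) :
    rsmul g (x + y) = rsmul g x + rsmul g y := by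
  simp [rsmul, smul_add]

/-- The right-factor `Γ`-module structure on `M ⊗[K] N`.  Not an instance, to avoid
diamonds; it is only used to construct `tensorTensorModule` below. -/
noncomputable def tensorRightModule : Module Γ (M ⊗[K] N) where
  smul := rsmul
  one_smul x := by show rsmul 1 x = x; simp [rsmul]
  mul_smul g h x := by
    show rsmul (g * h) x = rsmul g (rsmul h x); simp [rsmul, mul_smul]
  smul_zero g := by show rsmul g 0 = 0; simp [rsmul]
  smul_add g x y := by show rsmul g (x + y) = rsmul g x + rsmul g y; exact rsmul_add g x y
  add_smul g h x := by
    show rsmul (g + h) x = rsmul g x + rsmul h x; simp [rsmul, add_smul]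
  zero_smul x := by show rsmul 0 x = 0; simp [rsmul]

instance tensorLeftTower : IsScalarTower K Λ (M ⊗[K] N) := by
  constructor
  intro c a x
  induction x using TensorProduct.induction_on with
  | zero => simp
  | tmul m n =>
      rw [TensorProduct.smul_tmul', TensorProduct.smul_tmul', smul_assoc]
      exact (TensorProduct.smul_tmul' c (a • m) n).symm
  | add x y hx hy => rw [smul_add, smul_add, hx, hy]; exact (smul_add c _ _).symm

lemma pre_smulCommClass :
    letI : Module Γ (M ⊗[K] N) := tensorRightModule
    SMulCommClass Λ Γ (M ⊗[K] N) := by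
  letI : Module Γ (M ⊗[K] N) := tensorRightModule
  constructor
  intro a g x
  show a • rsmul g x = rsmul g (a • x)
  induction x using TensorProduct.induction_on with
  | zero => simp [rsmul]
  | tmul m n => rw [rsmul_tmul, TensorProduct.smul_tmul', TensorProduct.smul_tmul', rsmul_tmul]
  | add x y hx hy => rw [rsmul_add, smul_add, hx, hy, smul_add, rsmul_add]

lemma pre_rightTower :
    letI : Module Γ (M ⊗[K] N) := tensorRightModule
    IsScalarTower K Γ (M ⊗[K] N) := by
  letI : Module Γ (M ⊗[K] N) := tensorRightModule
  constructor
  intro c g x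
  show rsmul (c • g) x = c • rsmul g x
  unfold rsmul
  rw [smul_assoc]
  exact map_smul (TensorProduct.comm K M N).symm c _

/-- The `(Λ ⊗[K] Γ)`-module structure on `M ⊗[K] N`, characterized by
`(a ⊗ₜ b) • (m ⊗ₜ n) = (a • m) ⊗ₜ (b • n)`. -/
noncomputable instance tensorTensorModule :
    Module (Λ ⊗[K] Γ) (M ⊗[K] N) :=
  letI : Module Γ (M ⊗[K] N) := tensorRightModule
  haveI := (pre_smulCommClass (K := K) (Λ := Λ) (Γ := Γ) (M := M) (N := N))
  haveI := (pre_rightTower (K := K) (Γ := Γ) (M := M) (N := N))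
  TensorProduct.Algebra.module

lemma tensorTensor_smul_tmul (a : Λ) (g : Γ) (m : M) (n : N) :
    (a ⊗ₜ[K] g) • (m ⊗ₜ[K] n) = (a • m) ⊗ₜ[K] (g • n) := by
  letI : Module Γ (M ⊗[K] N) := tensorRightModule
  haveI := (pre_smulCommClass (K := K) (Λ := Λ) (Γ := Γ) (M := M) (N := N))
  haveI := (pre_rightTower (K := K) (Γ := Γ) (M := M) (N := N))
  show TensorProduct.Algebra.moduleAux (a ⊗ₜ[K] g) (m ⊗ₜ[K] n) = _
  rw [TensorProduct.Algebra.moduleAux_apply]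
  show a • rsmul g (m ⊗ₜ[K] n) = _
  rw [rsmul_tmul, TensorProduct.smul_tmul']

instance tensorTensorTower : IsScalarTower K (Λ ⊗[K] Γ) (M ⊗[K] N) := by
  constructor
  intro c x v
  letI : Module Γ (M ⊗[K] N) := tensorRightModule
  haveI := (pre_smulCommClass (K := K) (Λ := Λ) (Γ := Γ) (M := M) (N := N))
  haveI := (pre_rightTower (K := K) (Γ := Γ) (M := M) (N := N))
  show TensorProduct.Algebra.moduleAux (c • x) v = c • TensorProduct.Algebra.moduleAux x v
  rw [map_smul, LinearMap.smul_apply]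

end Pre

/-- `π : P → M` is a projective cover: `P` is projective and `π` is a surjection whose
kernel is superfluous (equivalently, contained in `rad P`). -/
def IsProjectiveCover (R : Type*) {P M : Type*} [Ring R]
    [AddCommGroup P] [Module R P] [AddCommGroup M] [Module R M] (π : P →ₗ[R] M) : Prop :=
  Module.Projective R P ∧ Function.Surjective π ∧
    ∀ W : Submodule R P, W ⊔ LinearMap.ker π = ⊤ → W = ⊤

/-- `ι : M → I` is an injective envelope: `I` is injective and `ι` is an injection whose
range is an essential submodule of `I`. -/
def IsInjectiveEnvelope (R : Type*) {M I : Type*} [Ring R]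
    [AddCommGroup M] [Module R M] [AddCommGroup I] [Module R I] (ι : M →ₗ[R] I) : Prop :=
  Module.Injective R I ∧ Function.Injective ι ∧
    ∀ W : Submodule R I, W ⊓ LinearMap.range ι = ⊥ → W = ⊥

section Aux

lemma tt_smul_eq_map {K Λ Γ M N : Type*} [Field K] [Ring Λ] [Ring Γ] [Algebra K Λ] [Algebra K Γ]
    [AddCommGroup M] [Module K M] [Module Λ M] [IsScalarTower K Λ M]
    [AddCommGroup N] [Module K N] [Module Γ N] [IsScalarTower K Γ N]
    (a : Λ) (g : Γ) (x : M ⊗[K] N) :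
    (a ⊗ₜ[K] g) • x =
      TensorProduct.map (Algebra.lsmul K K M a) (Algebra.lsmul K K N g) x := by
  induction x using TensorProduct.induction_on with
  | zero => rw [smul_zero, map_zero]
  | tmul m n => rw [tensorTensor_smul_tmul]; rfl
  | add x y hx hy => rw [smul_add, hx, hy, map_add]

/-- The tensor product of two module maps, as a map over the tensor product algebra. -/
noncomputable def ttMap {K Λ Γ M N P Q : Type*} [Field K] [Ring Λ] [Ring Γ]
    [Algebra K Λ] [Algebra K Γ]
    [AddCommGroup M] [Module K M] [Module Λ M] [IsScalarTower K Λ M]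
    [AddCommGroup N] [Module K N] [Module Γ N] [IsScalarTower K Γ N]
    [AddCommGroup P] [Module K P] [Module Λ P] [IsScalarTower K Λ P]
    [AddCommGroup Q] [Module K Q] [Module Γ Q] [IsScalarTower K Γ Q]
    (f : P →ₗ[Λ] M) (g : Q →ₗ[Γ] N) : (P ⊗[K] Q) →ₗ[Λ ⊗[K] Γ] (M ⊗[K] N) where
  toFun := TensorProduct.map (f.restrictScalars K) (g.restrictScalars K)
  map_add' := map_add _
  map_smul' := by
    intro r x
    simp only [RingHom.id_apply]
    induction r using TensorProduct.induction_on with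
    | zero => rw [zero_smul, zero_smul, map_zero]
    | add r s hr hs => rw [add_smul, add_smul, map_add, hr, hs]
    | tmul a b =>
      induction x using TensorProduct.induction_on with
      | zero => simp only [smul_zero, map_zero]
      | add x y hx hy => rw [smul_add, map_add, map_add, smul_add, hx, hy]
      | tmul p q =>
        rw [tensorTensor_smul_tmul, TensorProduct.map_tmul, TensorProduct.map_tmul,
          tensorTensor_smul_tmul]
        simp

/-- Superfluous kernels are preserved by tensoring with a finite dimensional space. -/
lemma superfluous_rTensor {K Λ P M V : Type*} [Field K] [Ring Λ] [Algebra K Λ]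
    [AddCommGroup M] [Module K M] [Module Λ M] [IsScalarTower K Λ M]
    [AddCommGroup P] [Module K P] [Module Λ P] [IsScalarTower K Λ P]
    [AddCommGroup V] [Module K V] [FiniteDimensional K V]
    (f : P →ₗ[Λ] M) (hs : Function.Surjective f)
    (hf : ∀ W : Submodule Λ P, W ⊔ LinearMap.ker f = ⊤ → W = ⊤)
    (W : Submodule K (P ⊗[K] V))
    (hW : ∀ (a : Λ), ∀ w ∈ W, (Algebra.lsmul K K P a).rTensor V w ∈ W)
    (h : W ⊔ LinearMap.ker ((f.restrictScalars K).rTensor V) = ⊤) : W = ⊤ := by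
  classical
  let b := Module.finBasis K V
  let j : V → P →ₗ[K] P ⊗[K] V := fun v => (TensorProduct.mk K P V).flip v
  let L : Submodule K P := LinearMap.ker (f.restrictScalars K)
  have hker : LinearMap.ker ((f.restrictScalars K).rTensor V) ≤
      Finset.univ.sup (fun k => L.map (j (b k))) := by
    have hex : Function.Exact L.subtype (f.restrictScalars K) := by
      intro x
      exact ⟨fun hx => ⟨⟨x, hx⟩, rfl⟩, fun ⟨y, hy⟩ => hy ▸ y.2⟩
    have := (rTensor_exact V hex hs).linearMap_ker_eq
    rw [this]
    rintro _ ⟨x, rfl⟩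
    induction x using TensorProduct.induction_on with
    | zero => rw [map_zero]; exact zero_mem _
    | add x y hx hy => rw [map_add]; exact add_mem hx hy
    | tmul l v =>
      rw [LinearMap.rTensor_tmul, ← b.sum_repr v, TensorProduct.tmul_sum]
      refine sum_mem fun k _ => ?_
      have hle : L.map (j (b k)) ≤ Finset.univ.sup (fun k => L.map (j (b k))) :=
        Finset.le_sup (f := fun k => L.map (j (b k))) (Finset.mem_univ k)
      rw [TensorProduct.tmul_smul]
      exact Submodule.smul_mem _ _ (hle ⟨l, l.2, rfl⟩)
  have key : ∀ (s : Finset (Fin (Module.finrank K V))) ,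
      W ⊔ s.sup (fun k => L.map (j (b k))) = ⊤ → W = ⊤ := by
    intro s
    suffices H : ∀ W : Submodule K (P ⊗[K] V),
        (∀ (a : Λ), ∀ w ∈ W, (Algebra.lsmul K K P a).rTensor V w ∈ W) →
        W ⊔ s.sup (fun k => L.map (j (b k))) = ⊤ → W = ⊤ from H W hW
    induction s using Finset.induction_on with
    | empty => intro W _ h; simpa using h
    | insert k s hk ih =>
      intro W hW h
      rw [Finset.sup_insert, ← sup_assoc] at h
      have h1 := ih (W ⊔ L.map (j (b k))) ?_ h
      · let W' : Submodule Λ P :=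
          { carrier := {p | j (b k) p ∈ W}
            add_mem' := fun {x y} hx hy => by
              change j (b k) (x + y) ∈ W; rw [map_add]; exact add_mem hx hy
            zero_mem' := by simp
            smul_mem' := fun a x hx => by
              have := hW a _ hx
              simpa [j] using this }
        have hW' : W' = ⊤ := by
          apply hf
          rw [eq_top_iff]
          rintro p -
          have hp : j (b k) p ∈ W ⊔ L.map (j (b k)) := h1 ▸ Submodule.mem_top
          obtain ⟨w, hw, _, ⟨l, hl, rfl⟩, e⟩ := Submodule.mem_sup.1 hp
          refine Submodule.mem_sup.2 ⟨p - l, ?_, l, ?_, by abel⟩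
          · change j (b k) (p - l) ∈ W
            rw [map_sub, ← e, add_sub_cancel_right]; exact hw
          · simpa [L] using hl
        rw [← h1, eq_comm, sup_eq_left]
        rintro _ ⟨l, -, rfl⟩
        have : l ∈ W' := hW' ▸ Submodule.mem_top
        exact this
      · intro a w hw0
        obtain ⟨w, hw, _, ⟨l, hl, rfl⟩, rfl⟩ := Submodule.mem_sup.1 hw0
        rw [map_add]
        refine Submodule.add_mem_sup (hW a w hw) ⟨a • l, ?_, ?_⟩
        · have : f l = 0 := by simpa [L] using hl
          simp [L, this]
        · simp [j]
  exact key Finset.univ (top_unique (h ▸ sup_le_sup_left hker W))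

/-- Essential ranges are preserved by tensoring with a vector space. -/
lemma essential_rTensor {K Λ I M V : Type*} [Field K] [Ring Λ] [Algebra K Λ]
    [AddCommGroup M] [Module K M] [Module Λ M] [IsScalarTower K Λ M]
    [AddCommGroup I] [Module K I] [Module Λ I] [IsScalarTower K Λ I]
    [AddCommGroup V] [Module K V]
    (f : M →ₗ[Λ] I)
    (hf : ∀ W : Submodule Λ I, W ⊓ LinearMap.range f = ⊥ → W = ⊥)
    (W : Submodule K (I ⊗[K] V))
    (hW : ∀ (a : Λ), ∀ w ∈ W, (Algebra.lsmul K K I a).rTensor V w ∈ W)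
    (h : W ⊓ LinearMap.range ((f.restrictScalars K).rTensor V) = ⊥) : W = ⊥ := by
  classical
  let b := Module.Basis.ofVectorSpace K V
  let c := fun w : I ⊗[K] V => TensorProduct.equivFinsuppOfBasisRight (M := I) b w
  have hc : ∀ (a : Λ) w k, c ((Algebra.lsmul K K I a).rTensor V w) k = a • c w k := by
    intro a w k
    induction w using TensorProduct.induction_on with
    | zero => simp [c]
    | add x y hx hy => simp only [c, map_add, Finsupp.add_apply, smul_add] at *; rw [hx, hy]
    | tmul x v =>
      simp only [c, LinearMap.rTensor_tmul, TensorProduct.equivFinsuppOfBasisRight_apply_tmul_apply,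
        Algebra.lsmul_coe]
      exact smul_comm _ _ _
  have hel : ∀ x : I, x ≠ 0 → ∃ a : Λ, a • x ≠ 0 ∧ a • x ∈ LinearMap.range f := by
    intro x hx
    by_contra! hcon
    have := hf (Submodule.span Λ {x}) ?_
    · exact hx (by simpa using this)
    · rw [eq_bot_iff]
      rintro y ⟨hy1, hy2⟩
      obtain ⟨a, rfl⟩ := Submodule.mem_span_singleton.1 hy1
      by_contra h0
      exact hcon a h0 hy2
  have key : ∀ n : ℕ, ∀ w ∈ W,
      ((c w).support.filter (fun k => c w k ∉ LinearMap.range f)).card = n → w = 0 := by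
    intro n
    induction n using Nat.strong_induction_on with
    | _ n ih =>
      intro w hw hn
      by_cases hall : ∀ k, c w k ∈ LinearMap.range f
      · have : w ∈ W ⊓ LinearMap.range ((f.restrictScalars K).rTensor V) := by
          refine ⟨hw, ?_⟩
          have e : w = (c w).sum fun k x => x ⊗ₜ[K] b k := by
            have := (TensorProduct.equivFinsuppOfBasisRight (M := I) b).symm_apply_apply w
            rw [TensorProduct.equivFinsuppOfBasisRight_symm_apply] at this
            exact this.symm
          rw [e]
          refine sum_mem fun k _ => ?_
          obtain ⟨m, hm⟩ := hall k
          exact ⟨m ⊗ₜ b k, by simp [hm]⟩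
        rw [h] at this
        simpa using this
      · push Not at hall
        obtain ⟨k, hk⟩ := hall
        have hk0 : c w k ≠ 0 := fun h0 => hk (h0 ▸ zero_mem _)
        obtain ⟨a, ha0, ha⟩ := hel _ hk0
        have := ih _ ?_ ((Algebra.lsmul K K I a).rTensor V w) (hW a w hw) rfl
        · exact absurd (by rw [← hc, this]; simp [c]) ha0
        · rw [← hn]
          apply Finset.card_lt_card
          rw [Finset.ssubset_iff_of_subset]
          · refine ⟨k, Finset.mem_filter.2 ⟨Finsupp.mem_support_iff.2 hk0, hk⟩, ?_⟩
            simp only [Finset.mem_filter, hc, not_and, not_not]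
            exact fun _ => ha
          · intro l
            simp only [Finset.mem_filter, hc, Finsupp.mem_support_iff]
            rintro ⟨h1, h2⟩
            refine ⟨fun h0 => h1 (by rw [h0, smul_zero]), fun h3 => h2 (Submodule.smul_mem _ _ h3)⟩
  rw [eq_bot_iff]
  intro w hw
  exact key _ w hw rfl

/-- The coinduced module. -/
def Coind (K R I : Type*) [Field K] [Ring R] [Algebra K R] [AddCommGroup I] [Module K I] :=
  R →ₗ[K] I

noncomputable instance (K R I : Type*) [Field K] [Ring R] [Algebra K R] [AddCommGroup I]
    [Module K I] : AddCommGroup (Coind K R I) :=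
  inferInstanceAs (AddCommGroup (R →ₗ[K] I))

noncomputable instance (K R I : Type*) [Field K] [Ring R] [Algebra K R] [AddCommGroup I]
    [Module K I] : Module R (Coind K R I) where
  smul r f := (show R →ₗ[K] I from f) ∘ₗ LinearMap.mulRight K r
  one_smul f := LinearMap.ext fun x => congrArg (show R →ₗ[K] I from f) (mul_one x)
  mul_smul r s f := LinearMap.ext fun x =>
    congrArg (show R →ₗ[K] I from f) (mul_assoc x r s).symm
  smul_zero r := LinearMap.ext fun x => rfl
  smul_add r f g := LinearMap.ext fun x => rfl
  add_smul r s f := LinearMap.ext fun x =>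
    (congrArg (show R →ₗ[K] I from f) (mul_add x r s)).trans (map_add _ _ _)
  zero_smul f := LinearMap.ext fun x =>
    (congrArg (show R →ₗ[K] I from f) (mul_zero x)).trans (map_zero _)

/-- The map `x ↦ (a ↦ a • x)`. -/
noncomputable def orb (K R : Type*) {I : Type*} [Field K] [Ring R] [Algebra K R] [AddCommGroup I]
    [Module K I] [Module R I] [IsScalarTower K R I] (x : I) : R →ₗ[K] I :=
  (LinearMap.toSpanSingleton R I x).restrictScalars K

@[simp] lemma orb_apply (K R : Type*) {I : Type*} [Field K] [Ring R] [Algebra K R]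
    [AddCommGroup I] [Module K I] [Module R I] [IsScalarTower K R I] (x : I) (a : R) :
    orb K R x a = a • x := rfl

lemma exists_coind_retract (K R I : Type*) [Field K] [Ring R] [Algebra K R]
    [FiniteDimensional K R] [AddCommGroup I]
    [Module K I] [Module R I] [IsScalarTower K R I] (hI : Module.Injective R I) :
    ∃ s : (R →ₗ[K] I) →ₗ[K] I, (∀ x, s (orb K R x) = x) ∧
      ∀ (r : R) f, s (f ∘ₗ LinearMap.mulRight K r) = r • s f := by
  rcases subsingleton_or_nontrivial I with hsub | hnt
  · exact ⟨0, fun x => Subsingleton.elim _ _, fun _ _ => Subsingleton.elim _ _⟩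
  · obtain ⟨x, hx⟩ := exists_ne (0 : I)
    haveI : Small K := small_of_injective (smul_left_injective K hx)
    haveI : Small R := small_of_injective (Module.finBasis K R).equivFun.injective
    have hB := Module.Baer.of_injective hI
    let ι : I →ₗ[R] Coind K R I :=
      { toFun := fun x => orb K R x
        map_add' := fun x y => LinearMap.ext fun a => smul_add a x y
        map_smul' := fun r x => LinearMap.ext fun a => (mul_smul a r x).symm }
    have hι : Function.Injective ι := by
      intro x y h
      have := congrArg (fun f : Coind K R I => (show R →ₗ[K] I from f) 1) h
      change orb K R x 1 = orb K R y 1 at this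
      simpa only [orb_apply, one_smul] using this
    obtain ⟨s, hs⟩ := hB.extension_property ι hι LinearMap.id
    refine ⟨{ toFun := fun f => s (show Coind K R I from f), map_add' := fun f g => s.map_add _ _
              map_smul' := fun c f => ?_ }, fun x => LinearMap.congr_fun hs x,
              fun r f => s.map_smul r (show Coind K R I from f)⟩
    have h1 : (show Coind K R I from c • f) =
        (algebraMap K R c) • (show Coind K R I from f) := by
      refine LinearMap.ext fun a => ?_
      change c • f a = f (a * algebraMap K R c)
      rw [← Algebra.commutes, ← Algebra.smul_def, map_smul]
    simp only [RingHom.id_apply]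
    refine (congrArg s h1).trans ?_
    rw [s.map_smul, algebraMap_smul]

lemma injective_of_coind_retract (K R I : Type*) [Field K] [Ring R] [Algebra K R]
    [AddCommGroup I] [Module K I] [Module R I] [IsScalarTower K R I]
    (s : (R →ₗ[K] I) →ₗ[K] I) (h1 : ∀ x, s (orb K R x) = x)
    (h2 : ∀ (r : R) f, s (f ∘ₗ LinearMap.mulRight K r) = r • s f) : Module.Injective R I := by
  constructor
  intro X Y _ _ _ _ i hi g
  letI : Module K X := Module.compHom X (algebraMap K R)
  letI : Module K Y := Module.compHom Y (algebraMap K R)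
  haveI : IsScalarTower K R X := ⟨fun c r x => by
    rw [Algebra.smul_def, mul_smul]; rfl⟩
  haveI : IsScalarTower K R Y := ⟨fun c r x => by
    rw [Algebra.smul_def, mul_smul]; rfl⟩
  obtain ⟨l, hl⟩ := (i.restrictScalars K).exists_leftInverse_of_injective
    (LinearMap.ker_eq_bot.2 hi)
  let h : Y →ₗ[K] I := (g.restrictScalars K) ∘ₗ l
  have hh : ∀ x, h (i x) = g x := fun x => congrArg g (LinearMap.congr_fun hl x)
  refine ⟨{ toFun := fun y => s (h ∘ₗ orb K R y), map_add' := ?_, map_smul' := ?_ }, ?_⟩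
  · intro y z
    rw [← map_add]
    congr 1
    ext a
    simp
  · intro r y
    simp only [RingHom.id_apply]
    rw [← h2]
    congr 1
    ext a
    simp [mul_smul]
  · intro x
    change s (h ∘ₗ orb K R (i x)) = g x
    rw [← h1 (g x)]
    congr 1
    ext a
    change h (a • i x) = a • g x
    rw [← map_smul, hh, map_smul]

lemma exists_proj_section (K R P : Type*) [Field K] [Ring R] [Algebra K R]
    [AddCommGroup P] [Module K P] [Module R P] [IsScalarTower K R P]
    (hP : Module.Projective R P) :
    ∃ s : P →ₗ[K] R ⊗[K] P,
      (∀ x, TensorProduct.lift (Algebra.lsmul K K P).toLinearMap (s x) = x) ∧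
      ∀ (r : R) x, s (r • x) = (LinearMap.mulLeft K r).rTensor P (s x) := by
  let μ : R ⊗[K] P →ₗ[R] P := TensorProduct.AlgebraTensorModule.lift
    { toFun := fun r => (Algebra.lsmul K K P r), map_add' := fun _ _ => map_add _ _ _
      map_smul' := fun r a => by ext; simp [mul_smul] }
  have hμ : Function.Surjective μ := fun x => ⟨1 ⊗ₜ x, by simp [μ]⟩
  obtain ⟨s, hs⟩ := Module.projective_lifting_property μ LinearMap.id hμ
  refine ⟨s.restrictScalars K, fun x => ?_, fun r x => ?_⟩
  · exact LinearMap.congr_fun hs x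
  · change s (r • x) = _
    rw [map_smul]
    change r • s x = (LinearMap.mulLeft K r).rTensor P (s x)
    generalize s x = t
    induction t using TensorProduct.induction_on with
    | zero => simp
    | add x y hx hy => rw [smul_add, map_add, hx, hy]
    | tmul a p => rfl

lemma projective_of_section (K R P : Type*) [Field K] [Ring R] [Algebra K R]
    [AddCommGroup P] [Module K P] [Module R P] [IsScalarTower K R P]
    (s : P →ₗ[K] R ⊗[K] P)
    (h1 : ∀ x, TensorProduct.lift (Algebra.lsmul K K P).toLinearMap (s x) = x)
    (h2 : ∀ (r : R) x, s (r • x) = (LinearMap.mulLeft K r).rTensor P (s x)) :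
    Module.Projective R P := by
  let μ : R ⊗[K] P →ₗ[R] P := TensorProduct.AlgebraTensorModule.lift
    { toFun := fun r => (Algebra.lsmul K K P r), map_add' := fun _ _ => map_add _ _ _
      map_smul' := fun r a => by ext; simp [mul_smul] }
  let s' : P →ₗ[R] R ⊗[K] P :=
    { toFun := s, map_add' := map_add s, map_smul' := fun r x => by
        rw [h2]
        simp only [RingHom.id_apply]
        generalize s x = t
        induction t using TensorProduct.induction_on with
        | zero => simp
        | add x y hx hy => rw [smul_add, map_add, hx, hy]
        | tmul a p => rfl }
  exact Module.Projective.of_split s' μ (LinearMap.ext h1)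

lemma injective_tensor {K Λ Γ M N : Type*} [Field K] [Ring Λ] [Ring Γ] [Algebra K Λ] [Algebra K Γ]
    [FiniteDimensional K Λ] [FiniteDimensional K Γ]
    [AddCommGroup M] [Module K M] [Module Λ M] [IsScalarTower K Λ M]
    [AddCommGroup N] [Module K N] [Module Γ N] [IsScalarTower K Γ N]
    (hM : Module.Injective Λ M) (hN : Module.Injective Γ N) :
    Module.Injective (Λ ⊗[K] Γ) (M ⊗[K] N) := by
  obtain ⟨s, hs1, hs2⟩ := exists_coind_retract K Λ M hM
  obtain ⟨t, ht1, ht2⟩ := exists_coind_retract K Γ N hN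
  let e := homTensorHomEquiv K Λ Γ M N
  have he : ∀ f g, e (f ⊗ₜ g) = TensorProduct.map f g := fun f g => by
    simp [e]
  refine injective_of_coind_retract K (Λ ⊗[K] Γ) (M ⊗[K] N)
    (TensorProduct.map s t ∘ₗ e.symm.toLinearMap) ?_ ?_
  · intro x
    induction x using TensorProduct.induction_on with
    | zero =>
      have : orb K (Λ ⊗[K] Γ) (0 : M ⊗[K] N) = 0 := by ext; simp
      rw [this, map_zero]
    | add x y hx hy =>
      have : orb K (Λ ⊗[K] Γ) (x + y) = orb K (Λ ⊗[K] Γ) x + orb K (Λ ⊗[K] Γ) y :=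
        LinearMap.ext fun a => smul_add a x y
      rw [this, map_add, hx, hy]
    | tmul m n =>
      have : orb K (Λ ⊗[K] Γ) (m ⊗ₜ[K] n) = e (orb K Λ m ⊗ₜ orb K Γ n) := by
        rw [he]
        refine TensorProduct.ext' fun a g => ?_
        rw [orb_apply, tensorTensor_smul_tmul]; rfl
      rw [this]
      simp [hs1, ht1]
  · intro r f
    obtain ⟨f, rfl⟩ := e.surjective f
    induction r using TensorProduct.induction_on with
    | zero =>
      have : e f ∘ₗ LinearMap.mulRight K (0 : Λ ⊗[K] Γ) = 0 :=
        LinearMap.ext fun a => by simp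
      rw [this, map_zero, zero_smul]
    | add x y hx hy =>
      have : e f ∘ₗ LinearMap.mulRight K (x + y) =
          e f ∘ₗ LinearMap.mulRight K x + e f ∘ₗ LinearMap.mulRight K y :=
        LinearMap.ext fun a => by simp [mul_add]
      rw [this, map_add, hx, hy, add_smul]
    | tmul a b =>
      induction f using TensorProduct.induction_on with
      | zero => rw [map_zero, LinearMap.zero_comp, map_zero, smul_zero]
      | add x y hx hy => rw [map_add, LinearMap.add_comp, map_add, map_add, smul_add, hx, hy]
      | tmul f g =>
        have : e (f ⊗ₜ g) ∘ₗ LinearMap.mulRight K (a ⊗ₜ[K] b) =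
            e ((f ∘ₗ LinearMap.mulRight K a) ⊗ₜ (g ∘ₗ LinearMap.mulRight K b)) := by
          rw [he, he]
          refine TensorProduct.ext' fun x y => ?_
          simp
        rw [this]
        simp [hs2, ht2, tensorTensor_smul_tmul]

lemma projective_tensor {K Λ Γ M N : Type*} [Field K] [Ring Λ] [Ring Γ]
    [Algebra K Λ] [Algebra K Γ]
    [AddCommGroup M] [Module K M] [Module Λ M] [IsScalarTower K Λ M]
    [AddCommGroup N] [Module K N] [Module Γ N] [IsScalarTower K Γ N]
    (hM : Module.Projective Λ M) (hN : Module.Projective Γ N) :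
    Module.Projective (Λ ⊗[K] Γ) (M ⊗[K] N) := by
  obtain ⟨s, hs1, hs2⟩ := exists_proj_section K Λ M hM
  obtain ⟨t, ht1, ht2⟩ := exists_proj_section K Γ N hN
  let e := TensorProduct.tensorTensorTensorComm K Λ M Γ N
  refine projective_of_section K (Λ ⊗[K] Γ) (M ⊗[K] N)
    (e.toLinearMap ∘ₗ TensorProduct.map s t) ?_ ?_
  · have key : ∀ (u : Λ ⊗[K] M) (v : Γ ⊗[K] N),
        TensorProduct.lift (Algebra.lsmul K K (M ⊗[K] N)).toLinearMap (e (u ⊗ₜ[K] v)) =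
        (TensorProduct.lift (Algebra.lsmul K K M).toLinearMap u) ⊗ₜ[K]
        (TensorProduct.lift (Algebra.lsmul K K N).toLinearMap v) := by
      intro u v
      induction u using TensorProduct.induction_on with
      | zero => simp
      | add x y hx hy => simp only [TensorProduct.add_tmul, map_add, hx, hy]
      | tmul a m =>
        induction v using TensorProduct.induction_on with
        | zero => simp
        | add x y hx hy => simp only [TensorProduct.tmul_add, map_add, hx, hy]
        | tmul b n =>
          simp only [e, TensorProduct.tensorTensorTensorComm_tmul]
          exact tensorTensor_smul_tmul a b m n
    intro x
    induction x using TensorProduct.induction_on with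
    | zero => simp
    | add x y hx hy => rw [map_add, map_add, hx, hy]
    | tmul m n =>
      change TensorProduct.lift _ (e (s m ⊗ₜ t n)) = _
      rw [key, hs1, ht1]
  · have key : ∀ (a : Λ) (b : Γ) (u : Λ ⊗[K] M) (v : Γ ⊗[K] N),
        e (((LinearMap.mulLeft K a).rTensor M u) ⊗ₜ[K] ((LinearMap.mulLeft K b).rTensor N v)) =
        (LinearMap.mulLeft K (a ⊗ₜ[K] b)).rTensor (M ⊗[K] N) (e (u ⊗ₜ[K] v)) := by
      intro a b u v
      induction u using TensorProduct.induction_on with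
      | zero => simp
      | add x y hx hy => simp only [TensorProduct.add_tmul, map_add, hx, hy]
      | tmul a m =>
        induction v using TensorProduct.induction_on with
        | zero => simp
        | add x y hx hy => simp only [TensorProduct.tmul_add, map_add, hx, hy]
        | tmul b n => simp [e]
    intro r x
    induction r using TensorProduct.induction_on with
    | zero => rw [zero_smul]; simp
    | add r r' hr hr' =>
      have : LinearMap.mulLeft K (r + r') = LinearMap.mulLeft K r + LinearMap.mulLeft K r' :=
        LinearMap.ext fun a => by simp [add_mul]
      rw [add_smul, map_add, hr, hr', this, LinearMap.rTensor_add, LinearMap.add_apply]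
    | tmul a b =>
      induction x using TensorProduct.induction_on with
      | zero => rw [smul_zero]; simp
      | add x y hx hy => rw [smul_add, map_add, map_add, map_add, hx, hy]
      | tmul m n =>
        rw [tensorTensor_smul_tmul]
        change e (s (a • m) ⊗ₜ t (b • n)) =
          (LinearMap.mulLeft K (a ⊗ₜ[K] b)).rTensor (M ⊗[K] N) (e (s m ⊗ₜ t n))
        rw [hs2, ht2, key]

lemma comm_rT {K P P' V : Type*} [Field K] [AddCommGroup P] [Module K P] [AddCommGroup P']
    [Module K P'] [AddCommGroup V] [Module K V] (g : P →ₗ[K] P') (x : V ⊗[K] P) :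
    g.rTensor V (TensorProduct.comm K V P x) = TensorProduct.comm K V P' (g.lTensor V x) :=
  LinearMap.congr_fun (LinearMap.rTensor_comp_comm g) x

lemma lsmul_lef {K Λ Γ : Type*} [Field K] [Ring Λ] [Ring Γ] [Algebra K Λ] [Algebra K Γ]
    {A B : Type*} [AddCommGroup A] [Module K A] [Module Λ A] [IsScalarTower K Λ A]
    [AddCommGroup B] [Module K B] [Module Γ B] [IsScalarTower K Γ B]
    (a : Λ) (x : A ⊗[K] B) :
    (Algebra.lsmul K K A a).rTensor B x = (a ⊗ₜ[K] (1 : Γ)) • x := by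
  rw [tt_smul_eq_map, map_one]; rfl

lemma lsmul_rig {K Λ Γ : Type*} [Field K] [Ring Λ] [Ring Γ] [Algebra K Λ] [Algebra K Γ]
    {A B : Type*} [AddCommGroup A] [Module K A] [Module Λ A] [IsScalarTower K Λ A]
    [AddCommGroup B] [Module K B] [Module Γ B] [IsScalarTower K Γ B]
    (a : Γ) (x : A ⊗[K] B) :
    (Algebra.lsmul K K B a).lTensor A x = ((1 : Λ) ⊗ₜ[K] a) • x := by
  rw [tt_smul_eq_map, map_one]; rfl

lemma superfluous_lTensor {K Γ P M V : Type*} [Field K] [Ring Γ] [Algebra K Γ]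
    [AddCommGroup M] [Module K M] [Module Γ M] [IsScalarTower K Γ M]
    [AddCommGroup P] [Module K P] [Module Γ P] [IsScalarTower K Γ P]
    [AddCommGroup V] [Module K V] [FiniteDimensional K V]
    (f : P →ₗ[Γ] M) (hs : Function.Surjective f)
    (hf : ∀ W : Submodule Γ P, W ⊔ LinearMap.ker f = ⊤ → W = ⊤)
    (W : Submodule K (V ⊗[K] P))
    (hW : ∀ (a : Γ), ∀ w ∈ W, (Algebra.lsmul K K P a).lTensor V w ∈ W)
    (h : W ⊔ LinearMap.ker ((f.restrictScalars K).lTensor V) = ⊤) : W = ⊤ := by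
  let e := TensorProduct.comm K V P
  have key := superfluous_rTensor (V := V) f hs hf (W.map e.toLinearMap) ?_ ?_
  · rw [eq_top_iff]
    intro x _
    have hx : e x ∈ W.map e.toLinearMap := key ▸ Submodule.mem_top
    obtain ⟨y, hy, hxy⟩ := hx
    exact e.injective hxy ▸ hy
  · rintro a _ ⟨w, hw, rfl⟩
    exact ⟨_, hW a w hw, (comm_rT _ w).symm⟩
  · rw [eq_top_iff]
    intro x _
    obtain ⟨x, rfl⟩ := e.surjective x
    have hx : x ∈ W ⊔ LinearMap.ker ((f.restrictScalars K).lTensor V) := h ▸ Submodule.mem_top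
    obtain ⟨w, hw, k, hk, rfl⟩ := Submodule.mem_sup.1 hx
    rw [map_add]
    refine Submodule.add_mem_sup ⟨w, hw, rfl⟩ ?_
    rw [LinearMap.mem_ker] at hk ⊢
    exact (comm_rT _ k).trans (by rw [hk, map_zero])

lemma essential_lTensor {K Γ I M V : Type*} [Field K] [Ring Γ] [Algebra K Γ]
    [AddCommGroup M] [Module K M] [Module Γ M] [IsScalarTower K Γ M]
    [AddCommGroup I] [Module K I] [Module Γ I] [IsScalarTower K Γ I]
    [AddCommGroup V] [Module K V]
    (f : M →ₗ[Γ] I)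
    (hf : ∀ W : Submodule Γ I, W ⊓ LinearMap.range f = ⊥ → W = ⊥)
    (W : Submodule K (V ⊗[K] I))
    (hW : ∀ (a : Γ), ∀ w ∈ W, (Algebra.lsmul K K I a).lTensor V w ∈ W)
    (h : W ⊓ LinearMap.range ((f.restrictScalars K).lTensor V) = ⊥) : W = ⊥ := by
  let e := TensorProduct.comm K V I
  have key := essential_rTensor (V := V) f hf (W.map e.toLinearMap) ?_ ?_
  · rw [eq_bot_iff]
    intro x hx
    have hx : e x ∈ W.map e.toLinearMap := ⟨x, hx, rfl⟩
    rw [key] at hx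
    simpa using hx
  · rintro a _ ⟨w, hw, rfl⟩
    exact ⟨_, hW a w hw, (LinearMap.congr_fun (LinearMap.rTensor_comp_comm _) w).symm⟩
  · rw [eq_bot_iff]
    rintro _ ⟨⟨w, hw, rfl⟩, y, hy⟩
    obtain ⟨y, rfl⟩ := (TensorProduct.comm K V M).surjective y
    have hy' : e ((f.restrictScalars K).lTensor V y) = e w :=
      (LinearMap.congr_fun (LinearMap.rTensor_comp_comm (f.restrictScalars K)) y).symm.trans hy
    have : w ∈ W ⊓ LinearMap.range ((f.restrictScalars K).lTensor V) :=
      ⟨hw, y, e.injective hy'⟩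
    rw [h] at this
    have h0 : w = 0 := by simpa using this
    simp [h0]

end Aux

open TensorProduct in
/-- Tensor products of projective covers are projective covers, and tensor
products of injective envelopes are injective envelopes, over `Λ ⊗[K] Γ`. -/
theorem projectiveCover_injectiveEnvelope_tensorProduct
    (K Λ Γ M N PM PN IM IN : Type*) [Field K] [IsAlgClosed K] [Ring Λ] [Ring Γ]
    [Algebra K Λ] [Algebra K Γ] [FiniteDimensional K Λ] [FiniteDimensional K Γ]
    [AddCommGroup M] [Module K M] [Module Λ M] [IsScalarTower K Λ M] [Module.Finite Λ M]
    [AddCommGroup N] [Module K N] [Module Γ N] [IsScalarTower K Γ N] [Module.Finite Γ N]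
    [AddCommGroup PM] [Module K PM] [Module Λ PM] [IsScalarTower K Λ PM] [Module.Finite Λ PM]
    [AddCommGroup PN] [Module K PN] [Module Γ PN] [IsScalarTower K Γ PN] [Module.Finite Γ PN]
    [AddCommGroup IM] [Module K IM] [Module Λ IM] [IsScalarTower K Λ IM] [Module.Finite Λ IM]
    [AddCommGroup IN] [Module K IN] [Module Γ IN] [IsScalarTower K Γ IN] [Module.Finite Γ IN]
    (πM : PM →ₗ[Λ] M) (πN : PN →ₗ[Γ] N) (ιM : M →ₗ[Λ] IM) (ιN : N →ₗ[Γ] IN)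
    (hπM : IsProjectiveCover Λ πM) (hπN : IsProjectiveCover Γ πN)
    (hιM : IsInjectiveEnvelope Λ ιM) (hιN : IsInjectiveEnvelope Γ ιN) :
    (∃ F : (PM ⊗[K] PN) →ₗ[Λ ⊗[K] Γ] (M ⊗[K] N),
        (∀ (p : PM) (q : PN), F (p ⊗ₜ[K] q) = (πM p) ⊗ₜ[K] (πN q)) ∧
          IsProjectiveCover (Λ ⊗[K] Γ) F) ∧
      (∃ G : (M ⊗[K] N) →ₗ[Λ ⊗[K] Γ] (IM ⊗[K] IN),
        (∀ (x : M) (y : N), G (x ⊗ₜ[K] y) = (ιM x) ⊗ₜ[K] (ιN y)) ∧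
          IsInjectiveEnvelope (Λ ⊗[K] Γ) G) := by
  classical
  haveI : FiniteDimensional K PN := Module.Finite.trans Γ PN
  haveI : FiniteDimensional K M := Module.Finite.trans Λ M
  obtain ⟨pM, sM, kM⟩ := hπM
  obtain ⟨pN, sN, kN⟩ := hπN
  obtain ⟨iM, jM, eM⟩ := hιM
  obtain ⟨iN, jN, eN⟩ := hιN
  refine ⟨⟨ttMap πM πN, fun p q => rfl, projective_tensor pM pN, ?_, ?_⟩,
    ⟨ttMap ιM ιN, fun p q => rfl, injective_tensor iM iN, ?_, ?_⟩⟩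
  · exact TensorProduct.map_surjective (g := πM.restrictScalars K) (g' := πN.restrictScalars K)
      sM sN
  · intro W hW
    let f := (πM.restrictScalars K).rTensor PN
    let g := (πN.restrictScalars K).lTensor M
    have hfg : ∀ x, ttMap πM πN x = g (f x) := fun x =>
      (LinearMap.congr_fun (LinearMap.lTensor_comp_rTensor _ (πM.restrictScalars K)
        (πN.restrictScalars K)) x).symm
    have hfs : Function.Surjective f := LinearMap.rTensor_surjective PN sM
    let W0 : Submodule K (PM ⊗[K] PN) := W.restrictScalars K
    have h1 : W0.map f = ⊤ := by
      refine superfluous_lTensor πN sN kN (W0.map f) ?_ ?_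
      · rintro a _ ⟨w, hw, rfl⟩
        refine ⟨(Algebra.lsmul K K PN a).lTensor PM w, ?_, ?_⟩
        · rw [lsmul_rig (Λ := Λ)]; exact W.smul_mem _ hw
        · have := LinearMap.congr_fun ((LinearMap.rTensor_comp_lTensor _ (πM.restrictScalars K)
            (Algebra.lsmul K K PN a)).trans (LinearMap.lTensor_comp_rTensor _
            (πM.restrictScalars K) (Algebra.lsmul K K PN a)).symm) w
          exact this
      · rw [eq_top_iff]
        intro y _
        obtain ⟨x, rfl⟩ := hfs y
        have hx : x ∈ W ⊔ LinearMap.ker (ttMap πM πN) := hW ▸ Submodule.mem_top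
        obtain ⟨w, hw, k, hk, rfl⟩ := Submodule.mem_sup.1 hx
        rw [map_add]
        refine Submodule.add_mem_sup ⟨w, hw, rfl⟩ ?_
        rw [LinearMap.mem_ker, hfg] at hk
        exact hk
    have h2 : W0 = ⊤ := by
      refine superfluous_rTensor πM sM kM W0 ?_ ?_
      · intro a w hw
        rw [lsmul_lef (Γ := Γ)]; exact W.smul_mem _ hw
      · rw [eq_top_iff]
        intro x _
        have hx : f x ∈ W0.map f := h1 ▸ Submodule.mem_top
        obtain ⟨w, hw, e⟩ := hx
        refine Submodule.mem_sup.2 ⟨w, hw, x - w, ?_, by abel⟩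
        rw [LinearMap.mem_ker]
        change f (x - w) = 0
        rw [map_sub, e, sub_self]
    rw [eq_top_iff]
    intro x _
    have : x ∈ W0 := h2 ▸ Submodule.mem_top
    exact this
  · exact TensorProduct.map_injective_of_flat_flat (ιM.restrictScalars K) (ιN.restrictScalars K)
      jM jN
  · intro W hW
    let f := (ιM.restrictScalars K).rTensor IN
    let g := (ιN.restrictScalars K).lTensor M
    have hfg : ∀ x, ttMap ιM ιN x = f (g x) := fun x =>
      (LinearMap.congr_fun (LinearMap.rTensor_comp_lTensor _ (ιM.restrictScalars K)
        (ιN.restrictScalars K)) x).symm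
    have hfi : Function.Injective f := Module.Flat.rTensor_preserves_injective_linearMap _ jM
    let W0 : Submodule K (IM ⊗[K] IN) := W.restrictScalars K
    have h1 : W0.comap f = ⊥ := by
      refine essential_lTensor ιN eN (W0.comap f) ?_ ?_
      · intro a w hw
        have := LinearMap.congr_fun ((LinearMap.rTensor_comp_lTensor _ (ιM.restrictScalars K)
            (Algebra.lsmul K K IN a)).trans (LinearMap.lTensor_comp_rTensor _
            (ιM.restrictScalars K) (Algebra.lsmul K K IN a)).symm) w
        change f _ ∈ W
        refine this.symm ▸ ?_
        change (Algebra.lsmul K K IN a).lTensor IM (f w) ∈ W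
        rw [lsmul_rig (Λ := Λ)]; exact W.smul_mem _ hw
      · rw [eq_bot_iff]
        rintro _ ⟨hw, y, rfl⟩
        have : ttMap ιM ιN y ∈ W ⊓ LinearMap.range (ttMap ιM ιN) :=
          ⟨by rw [hfg]; exact hw, y, rfl⟩
        rw [hW, Submodule.mem_bot, hfg] at this
        exact hfi (this.trans (map_zero f).symm)
    have h2 : W0 = ⊥ := by
      refine essential_rTensor ιM eM W0 ?_ ?_
      · intro a w hw
        rw [lsmul_lef (Γ := Γ)]; exact W.smul_mem _ hw
      · rw [eq_bot_iff]
        rintro _ ⟨hw, y, rfl⟩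
        have : y ∈ W0.comap f := hw
        rw [h1, Submodule.mem_bot] at this
        rw [this, map_zero]; exact zero_mem _
    rw [eq_bot_iff]
    intro x hx
    have : x ∈ W0 := hx
    rw [h2] at this
    simpa using this
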